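/- arXiv:2406.07311 — 2 statements merged into one kernel-verified Lean document; each statement's English description precedes it below -/
import Mathlib

section
/- Let n ≥ 3 and let λ be a partition of n. Then Σ_{π ∈ C_λ} occ₍₁₂₃₎(π) = |C_λ| · ( (n−2)/6 + X₁/n + X₂/(n(n−1)) + X₃/n + X₄/(n(n−1)) ), where occ₍₁₂₃₎(π) = #{i : 1 ≤ i ≤ n−2, π(i) < π(i+1) < π(i+2)} is the number of occurrences of the consecutive (vincular) pattern (123) in π. -/
open Equiv Finset

/-- The conjugacy class of permutations of `Fin n` with cycle type `lam`
(cycle type includes fixed points as parts of size 1, via `Equiv.Perm.partition`). -/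
def conjClass (n : ℕ) (lam : n.Partition) : Finset (Equiv.Perm (Fin n)) :=
  Finset.univ.filter fun π => (Equiv.Perm.partition π).parts = lam.parts

/-!
Conjugation by the six permutations of the positions in a window `i, i + 1, i + 2` preserves a
conjugacy class, so six times the number of its members increasing on the window is the sum, over
its members `τ`, of the number of the six conjugates of `τ` that are increasing there. That number
depends only on how `τ` acts inside the window: it equals `1 + (f₂ - c₂) / 2 + (f₃ - c₃) / 3`, where
`f_l` counts the injective `l`-tuples of window points fixed by `τ`, and `c_l` those that `τ`
permutes cyclically. If at most one window point is mapped into the window, relabelling cannot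
change the relative order of the values and exactly one conjugate is increasing; otherwise at most
one value lies outside the window, only its side matters, and finitely many cases remain.
Since `S_n` is `l`-transitive, a conjugacy class has on average the same proportion of fixed
`l`-tuples and `l`-cycles inside a window as in all of `Fin n`, where the cycle type counts them.
-/

section Copies

variable {κ α β : Type*} [Fintype κ] [DecidableEq κ] [Fintype α] [DecidableEq α] [DecidableEq β]

/-- The embedded copies of the permutation `c` in the partial map sending `e a` to `f a`.
With `e = id` these are the copies of `c` in `f` itself, and with `f = τ ∘ e` the copies of `c`
in `τ` that lie inside the window `e`. -/
def copies (c : Perm κ) (e f : α → β) : Finset (κ → α) :=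
  {x | x.Injective ∧ ∀ j, f (x j) = e (x (c j))}

theorem mem_copies {c : Perm κ} {e f : α → β} {x : κ → α} :
    x ∈ copies c e f ↔ x.Injective ∧ ∀ j, f (x j) = e (x (c j)) :=
  mem_filter_univ x

theorem copies_eq_empty [Nontrivial κ] (c : Perm κ) {e f : α → β}
    (hf : Pairwise fun a b => f a ∈ Set.range e → f b ∉ Set.range e) :
    copies c e f = ∅ := by
  refine eq_empty_of_forall_notMem fun x hx => ?_
  obtain ⟨x_injective, hx⟩ := mem_copies.1 hx
  have mem_range (j : κ) : f (x j) ∈ Set.range e := ⟨_, (hx j).symm⟩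
  obtain ⟨i, j, hij⟩ := exists_pair_ne κ
  exact hf (x_injective.ne hij) (mem_range i) (mem_range j)

end Copies

section Relabel

variable {k : ℕ} {β : Type*}

/-- The one-line notation on the window `e` after conjugating, by the permutation `ρ` of that
window, a permutation whose one-line notation there is `g` (see `conj_comp_eq_relabel`). -/
def relabel [DecidableEq β] (e : Fin k ↪ β) (g : Fin k → β) (ρ : Perm (Fin k)) : Fin k → β :=
  fun j => ρ.viaFintypeEmbedding e (g (ρ⁻¹ j))

theorem conj_comp_eq_relabel [DecidableEq β] (e : Fin k ↪ β) (τ : Perm β) (ρ : Perm (Fin k)) :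
    ⇑(ρ.viaFintypeEmbedding e * τ * (ρ.viaFintypeEmbedding e)⁻¹) ∘ e = relabel e (τ ∘ e) ρ := by
  funext j
  have inv_apply : (ρ.viaFintypeEmbedding e)⁻¹ (e j) = e (ρ⁻¹ j) := by
    rw [Perm.inv_eq_iff_eq, Perm.viaFintypeEmbedding_apply_image, Perm.coe_inv, apply_symm_apply]
  simp only [relabel, Function.comp_apply, Perm.mul_apply, inv_apply]

theorem card_filter_conj {G : Type*} [Group G] {s : Finset G}
    (hs : ∀ τ ∈ s, ∀ σ : G, σ * τ * σ⁻¹ ∈ s) (P : G → Prop) [DecidablePred P] (σ : G) :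
    #{τ ∈ s | P (σ * τ * σ⁻¹)} = #{τ ∈ s | P τ} := by
  refine card_bij' (fun τ _ => σ * τ * σ⁻¹) (fun τ _ => σ⁻¹ * τ * σ⁻¹⁻¹) ?_ ?_ ?_ ?_
  · intro τ hτ
    rw [mem_filter] at hτ ⊢
    exact ⟨hs τ hτ.1 σ, hτ.2⟩
  · intro τ hτ
    rw [mem_filter] at hτ ⊢
    refine ⟨hs τ hτ.1 σ⁻¹, ?_⟩
    convert hτ.2 using 1
    group
  · intro τ _
    group
  · intro τ _
    group

theorem factorial_mul_card_strictMono [LinearOrder β] {s : Finset (Perm β)}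
    (hs : ∀ τ ∈ s, ∀ σ : Perm β, σ * τ * σ⁻¹ ∈ s) (e : Fin k ↪ β) :
    k.factorial * #(s.filter fun τ : Perm β => StrictMono (τ ∘ e)) =
      ∑ τ ∈ s, #{ρ : Perm (Fin k) | StrictMono (relabel e (τ ∘ e) ρ)} := by
  calc k.factorial * #(s.filter fun τ : Perm β => StrictMono (τ ∘ e))
      = ∑ ρ : Perm (Fin k), #(s.filter fun τ : Perm β => StrictMono (relabel e (τ ∘ e) ρ)) := by
        simp only [← conj_comp_eq_relabel, card_filter_conj hs (fun τ => StrictMono (τ ∘ e)),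
          sum_const, card_univ, Fintype.card_perm, Fintype.card_fin, smul_eq_mul]
    _ = ∑ τ ∈ s, #{ρ : Perm (Fin k) | StrictMono (relabel e (τ ∘ e) ρ)} :=
        sum_card_bipartiteAbove_eq_sum_card_bipartiteBelow
          (fun ρ (τ : Perm β) => StrictMono (relabel e (τ ∘ e) ρ))

theorem lt_iff_lt_of_ordConnected [LinearOrder β] {t : Set β} (ht : t.OrdConnected) {a b z : β}
    (ha : a ∈ t) (hb : b ∈ t) (hz : z ∉ t) : a < z ↔ b < z := by
  constructor <;> intro h <;> by_contra! h'
  · exact hz (ht.out ha hb ⟨h.le, h'⟩)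
  · exact hz (ht.out hb ha ⟨h.le, h'⟩)

theorem viaFintypeEmbedding_lt_iff [LinearOrder β] (e : Fin k ↪ β)
    (he : (Set.range e).OrdConnected) (ρ : Perm (Fin k)) {y z : β}
    (hyz : y ∈ Set.range e → z ∉ Set.range e) :
    ρ.viaFintypeEmbedding e y < ρ.viaFintypeEmbedding e z ↔ y < z := by
  have ne_outside {a : Fin k} {u : β} (hu : u ∉ Set.range e) : u ≠ e a := by
    rintro rfl
    exact hu ⟨a, rfl⟩
  by_cases hy : y ∈ Set.range e
  · rw [Perm.viaFintypeEmbedding_apply_notMem_range ρ e (hyz hy)]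
    obtain ⟨a, rfl⟩ := hy
    rw [Perm.viaFintypeEmbedding_apply_image]
    exact lt_iff_lt_of_ordConnected he ⟨_, rfl⟩ ⟨_, rfl⟩ (hyz ⟨a, rfl⟩)
  · rw [Perm.viaFintypeEmbedding_apply_notMem_range ρ e hy]
    by_cases hz : z ∈ Set.range e
    · obtain ⟨a, rfl⟩ := hz
      rw [Perm.viaFintypeEmbedding_apply_image, ← (ne_outside hy).le_iff_lt,
        ← (ne_outside hy).le_iff_lt, ← not_lt, ← not_lt,
        lt_iff_lt_of_ordConnected he ⟨_, rfl⟩ ⟨_, rfl⟩ hy]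
    · rw [Perm.viaFintypeEmbedding_apply_notMem_range ρ e hz]

theorem strictMono_relabel_iff [LinearOrder β] {e : Fin k ↪ β} (he : (Set.range e).OrdConnected)
    {g : Fin k → β} (hg : Pairwise fun a b => g a ∈ Set.range e → g b ∉ Set.range e)
    (ρ : Perm (Fin k)) :
    StrictMono (relabel e g ρ) ↔ StrictMono (g ∘ ⇑ρ⁻¹) := by
  refine forall₃_congr fun a b hab => viaFintypeEmbedding_lt_iff e he ρ (hg ?_)
  exact ρ⁻¹.injective.ne hab.ne

theorem card_strictMono_comp_inv [LinearOrder β] {g : Fin k → β} (hg : g.Injective) :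
    #{ρ : Perm (Fin k) | StrictMono (g ∘ ⇑ρ⁻¹)} = 1 := by
  refine card_eq_one.2 ⟨(Tuple.sort g)⁻¹, ?_⟩
  ext ρ
  rw [mem_filter_univ, mem_singleton, ← inv_eq_iff_eq_inv, Tuple.eq_sort_iff]
  constructor
  · exact fun h => ⟨h.monotone, fun i j hij hgij => absurd hgij (h hij).ne⟩
  · exact fun h => h.1.strictMono_of_injective (hg.comp ρ⁻¹.injective)

theorem card_strictMono_relabel_of_pairwise [LinearOrder β] {e : Fin k ↪ β}
    (he : (Set.range e).OrdConnected) {g : Fin k → β} (g_injective : g.Injective)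
    (hg : Pairwise fun a b => g a ∈ Set.range e → g b ∉ Set.range e) :
    #{ρ : Perm (Fin k) | StrictMono (relabel e g ρ)} = 1 := by
  simp only [strictMono_relabel_iff he hg, card_strictMono_comp_inv g_injective]

end Relabel

section Transfer

variable {k : ℕ} {β γ : Type*} {e : Fin k ↪ β} {e' : Fin k ↪ γ} {φ : β → γ}

theorem semiconj_viaFintypeEmbedding [DecidableEq β] [DecidableEq γ] (hφe : ∀ j, φ (e j) = e' j)
    (hφ : ∀ y, φ y ∈ Set.range e' → y ∈ Set.range e) (ρ : Perm (Fin k)) :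
    Function.Semiconj φ (ρ.viaFintypeEmbedding e) (ρ.viaFintypeEmbedding e') := by
  intro y
  by_cases hy : y ∈ Set.range e
  · obtain ⟨a, rfl⟩ := hy
    rw [hφe, Perm.viaFintypeEmbedding_apply_image, Perm.viaFintypeEmbedding_apply_image, hφe]
  · rw [Perm.viaFintypeEmbedding_apply_notMem_range ρ e hy,
      Perm.viaFintypeEmbedding_apply_notMem_range ρ e' (mt (hφ y) hy)]

theorem strictMono_relabel_comp_iff [LinearOrder β] [LinearOrder γ] (φ_monotone : Monotone φ)
    (hφe : ∀ j, φ (e j) = e' j) (hφ : ∀ y, φ y ∈ Set.range e' → y ∈ Set.range e) {g : Fin k → β}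
    (hg : (φ ∘ g).Injective) (ρ : Perm (Fin k)) :
    StrictMono (relabel e' (φ ∘ g) ρ) ↔ StrictMono (relabel e g ρ) := by
  have comp_relabel : relabel e' (φ ∘ g) ρ = φ ∘ relabel e g ρ :=
    funext fun j => (semiconj_viaFintypeEmbedding hφe hφ ρ (g (ρ⁻¹ j))).symm
  constructor
  · rw [comp_relabel]
    exact fun h a b hab => φ_monotone.reflect_lt (h hab)
  · intro h
    have relabel_injective : (relabel e' (φ ∘ g) ρ).Injective :=
      (ρ.viaFintypeEmbedding e').injective.comp (hg.comp ρ⁻¹.injective)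
    refine Monotone.strictMono_of_injective ?_ relabel_injective
    rw [comp_relabel]
    exact φ_monotone.comp h.monotone

theorem copies_comp {κ : Type*} [Fintype κ] [DecidableEq κ] [DecidableEq β] [DecidableEq γ]
    (hφe : ∀ j, φ (e j) = e' j) (hφ : ∀ y, φ y ∈ Set.range e' → y ∈ Set.range e) (c : Perm κ)
    (g : Fin k → β) :
    copies c e' (φ ∘ g) = copies c e g := by
  have eq_iff (y : β) (a : Fin k) : φ y = e' a ↔ y = e a := by
    constructor
    · intro h
      obtain ⟨b, rfl⟩ := hφ y ⟨a, h.symm⟩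
      rw [e'.injective ((hφe b).symm.trans h)]
    · rintro rfl
      exact hφe a
  simp only [copies, Function.comp_apply, eq_iff]

end Transfer

section Model

/-- The window of `Fin (k + 2)` formed by all points but the first and the last. -/
def middle (k : ℕ) : Fin k ↪ Fin (k + 2) :=
  (Fin.castSuccOrderEmb.trans (Fin.succOrderEmb (k + 1))).toEmbedding

theorem val_middle {k : ℕ} (j : Fin k) : (middle k j : ℕ) = j + 1 := rfl

theorem viaFintypeEmbedding_middle {k : ℕ} (ρ : Perm (Fin k)) (y : Fin (k + 2)) :
    ρ.viaFintypeEmbedding (middle k) y =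
      Fin.cases 0 (Fin.lastCases (Fin.last (k + 1)) fun a => middle k (ρ a)) y := by
  induction y using Fin.cases with
  | zero =>
    refine Perm.viaFintypeEmbedding_apply_notMem_range ρ (middle k) ?_
    rintro ⟨a, ha⟩
    exact Fin.succ_ne_zero _ ha
  | succ y =>
    induction y using Fin.lastCases with
    | last =>
      rw [Fin.cases_succ, Fin.lastCases_last]
      refine Perm.viaFintypeEmbedding_apply_notMem_range ρ (middle k) ?_
      rintro ⟨a, ha⟩
      exact Fin.castSucc_ne_last a (Fin.succ_injective _ ha)
    | cast a =>
      rw [Fin.cases_succ, Fin.lastCases_castSucc]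
      exact Perm.viaFintypeEmbedding_apply_image ρ (middle k) a

theorem relabel_middle {k : ℕ} (g : Fin k → Fin (k + 2)) (ρ : Perm (Fin k)) :
    relabel (middle k) g ρ = fun j =>
      Fin.cases 0 (Fin.lastCases (Fin.last (k + 1)) fun a => middle k (ρ a)) (g (ρ⁻¹ j)) :=
  funext fun j => viaFintypeEmbedding_middle ρ (g (ρ⁻¹ j))

theorem card_strictMono_relabel_middle : ∀ g : Fin 3 → Fin (3 + 2), g.Injective →
    6 * #{ρ : Perm (Fin 3) | StrictMono (relabel (middle 3) g ρ)} +
        (3 * #(copies (finRotate 2) (middle 3) g) + 2 * #(copies (finRotate 3) (middle 3) g)) =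
      6 + (3 * #(copies (1 : Perm (Fin 2)) (middle 3) g) +
        2 * #(copies (1 : Perm (Fin 3)) (middle 3) g)) := by
  simp only [relabel_middle]
  decide +kernel

end Model

section Window

variable {n k : ℕ}

/-- The window `i, i + 1, …, i + k - 1` of `Fin n`; there are `n + 1 - k` of them. -/
def window (i : Fin (n + 1 - k)) : Fin k ↪ Fin n :=
  (Fin.natAddEmb (i : ℕ)).trans (Fin.castLEEmb (by omega))

theorem val_window (i : Fin (n + 1 - k)) (j : Fin k) : (window i j : ℕ) = i + j := rfl

theorem mem_range_window_iff (i : Fin (n + 1 - k)) (y : Fin n) :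
    y ∈ Set.range (window i) ↔ (i : ℕ) ≤ y ∧ (y : ℕ) < i + k := by
  constructor
  · rintro ⟨j, rfl⟩
    rw [val_window]
    omega
  · rintro ⟨h₁, h₂⟩
    exact ⟨⟨y - i, by omega⟩, Fin.ext (Nat.add_sub_cancel' h₁)⟩

theorem ordConnected_range_window (i : Fin (n + 1 - k)) : (Set.range (window i)).OrdConnected := by
  refine ⟨fun x hx y hy z ⟨hxz, hzy⟩ => ?_⟩
  rw [mem_range_window_iff] at hx hy ⊢
  omega

/-- The monotone map that matches the window at `i` with `middle k`, sending all points below that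
window to the first point and all points above it to the last one. -/
def collapse (i : Fin (n + 1 - k)) (y : Fin n) : Fin (k + 2) :=
  ⟨min (y + 1 - i) (k + 1), by omega⟩

theorem val_collapse (i : Fin (n + 1 - k)) (y : Fin n) :
    (collapse i y : ℕ) = min (y + 1 - i : ℕ) (k + 1) := rfl

theorem collapse_monotone (i : Fin (n + 1 - k)) : Monotone (collapse i) := by
  intro x y hxy
  rw [Fin.le_def, val_collapse, val_collapse]
  omega

theorem collapse_window (i : Fin (n + 1 - k)) (j : Fin k) :
    collapse i (window i j) = middle k j := by
  rw [Fin.ext_iff, val_collapse, val_window, val_middle]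
  omega

theorem mem_range_window_of_collapse_mem_range_middle (i : Fin (n + 1 - k)) (y : Fin n)
    (hy : collapse i y ∈ Set.range (middle k)) : y ∈ Set.range (window i) := by
  obtain ⟨j, hj⟩ := hy
  rw [Fin.ext_iff, val_middle, val_collapse] at hj
  rw [mem_range_window_iff]
  omega

theorem notMem_range_window_of_collapse_eq (i : Fin (n + 1 - k)) {y z : Fin n} (hyz : y ≠ z)
    (h : collapse i y = collapse i z) : y ∉ Set.range (window i) := by
  rw [Fin.ext_iff, val_collapse, val_collapse] at h
  rw [mem_range_window_iff]
  omega

theorem card_strictMono_relabel_window (i : Fin (n + 1 - 3)) {g : Fin 3 → Fin n}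
    (hg : g.Injective) :
    6 * #{ρ : Perm (Fin 3) | StrictMono (relabel (window i) g ρ)} +
        (3 * #(copies (finRotate 2) (window i) g) + 2 * #(copies (finRotate 3) (window i) g)) =
      6 + (3 * #(copies (1 : Perm (Fin 2)) (window i) g) +
        2 * #(copies (1 : Perm (Fin 3)) (window i) g)) := by
  by_cases hcollapse : (collapse i ∘ g).Injective
  · have model := card_strictMono_relabel_middle (collapse i ∘ g) hcollapse
    have hmem := mem_range_window_of_collapse_mem_range_middle i
    simp only [strictMono_relabel_comp_iff (collapse_monotone i) (collapse_window i) hmem hcollapse,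
      copies_comp (collapse_window i) hmem] at model
    exact model
  · obtain ⟨a, b, hab, a_ne_b⟩ := Function.not_injective_iff.1 hcollapse
    have ha := notMem_range_window_of_collapse_eq i (hg.ne a_ne_b) hab
    have hb := notMem_range_window_of_collapse_eq i (hg.ne a_ne_b.symm) hab.symm
    have hpair : Pairwise fun c d =>
        g c ∈ Set.range (window i) → g d ∉ Set.range (window i) := by
      intro c d c_ne_d hc hd
      have c_ne_a : c ≠ a := by rintro rfl; exact ha hc
      have c_ne_b : c ≠ b := by rintro rfl; exact hb hc
      have d_ne_a : d ≠ a := by rintro rfl; exact ha hd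
      have d_ne_b : d ≠ b := by rintro rfl; exact hb hd
      omega
    rw [card_strictMono_relabel_of_pairwise (ordConnected_range_window i) hg hpair,
      copies_eq_empty _ hpair, copies_eq_empty _ hpair, copies_eq_empty _ hpair,
      copies_eq_empty _ hpair, card_empty, card_empty]

end Window

section Averaging

variable {κ ι α : Type*}

theorem card_filter_apply_eq [DecidableEq α] [Fintype κ] {s : Finset (Perm α)}
    (hs : ∀ τ ∈ s, ∀ σ : Perm α, σ * τ * σ⁻¹ ∈ s) (c : Perm κ) {x y : κ → α} (hx : x.Injective)
    (hy : y.Injective) :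
    #{τ ∈ s | ∀ j, τ (x j) = x (c j)} = #{τ ∈ s | ∀ j, τ (y j) = y (c j)} := by
  obtain ⟨σ, hσ⟩ := Perm.exists_extending_pair x y hx hy
  rw [← card_filter_conj hs (fun τ => ∀ j, τ (y j) = y (c j)) σ]
  simp only [← hσ, Perm.mul_apply, Perm.coe_inv, symm_apply_apply, σ.apply_eq_iff_eq]

variable [Fintype κ] [DecidableEq κ] [Fintype ι] [DecidableEq ι] [DecidableEq α]

theorem card_filter_injective :
    #{x : κ → ι | x.Injective} = (Fintype.card ι).descFactorial (Fintype.card κ) := by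
  rw [← Fintype.card_subtype, Fintype.card_congr (subtypeInjectiveEquivEmbedding κ ι),
    Fintype.card_embedding_eq]

theorem sum_card_copies (s : Finset (Perm α)) (c : Perm κ) (e : ι → α) :
    ∑ τ ∈ s, #(copies c e (τ ∘ e)) =
      ∑ x : κ → ι with x.Injective, #{τ ∈ s | ∀ j, τ (e (x j)) = e (x (c j))} := by
  simp only [copies, Function.comp_apply, ← filter_filter]
  exact sum_card_bipartiteAbove_eq_sum_card_bipartiteBelow _

theorem descFactorial_mul_sum_card_copies [Fintype α] {s : Finset (Perm α)}
    (hs : ∀ τ ∈ s, ∀ σ : Perm α, σ * τ * σ⁻¹ ∈ s) (c : Perm κ) (e : ι ↪ α) :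
    (Fintype.card α).descFactorial (Fintype.card κ) * ∑ τ ∈ s, #(copies c e (τ ∘ e)) =
      (Fintype.card ι).descFactorial (Fintype.card κ) * ∑ τ ∈ s, #(copies c id τ) := by
  let N (x : κ → α) : ℕ := #{τ ∈ s | ∀ j, τ (x j) = x (c j)}
  calc (Fintype.card α).descFactorial (Fintype.card κ) * ∑ τ ∈ s, #(copies c e (τ ∘ e))
      = ∑ y : κ → α with y.Injective, ∑ x : κ → ι with x.Injective, N (e ∘ x) := by
        rw [sum_card_copies, sum_const, card_filter_injective, smul_eq_mul]
        rfl
    _ = ∑ y : κ → α with y.Injective, ∑ x : κ → ι with x.Injective, N y := by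
        refine sum_congr rfl fun y hy => sum_congr rfl fun x hx => ?_
        exact card_filter_apply_eq hs c (e.injective.comp (mem_filter_univ x |>.1 hx))
          (mem_filter_univ y |>.1 hy)
    _ = (Fintype.card ι).descFactorial (Fintype.card κ) * ∑ τ ∈ s, #(copies c id τ) := by
        simp only [sum_const, card_filter_injective, smul_eq_mul, ← mul_sum]
        exact congrArg _ (sum_card_copies s c id).symm

end Averaging

section FixedPoints

variable {α : Type*} [Fintype α] [DecidableEq α] (τ : Perm α)

theorem count_one_partition :
    τ.partition.parts.count 1 = Fintype.card (Function.fixedPoints τ) := by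
  have count_cycleType : τ.cycleType.count 1 = 0 :=
    Multiset.count_eq_zero.2 fun h => absurd (Perm.one_lt_of_mem_cycleType h) (lt_irrefl 1)
  rw [Perm.parts_partition, Multiset.count_add, count_cycleType, zero_add,
    Multiset.count_replicate_self, Perm.card_fixedPoints, Perm.sum_cycleType]

theorem card_copies_one {κ : Type*} [Fintype κ] [DecidableEq κ] :
    #(copies (1 : Perm κ) id τ) = (τ.partition.parts.count 1).descFactorial (Fintype.card κ) := by
  rw [count_one_partition, ← card_filter_injective]
  symm
  refine card_nbij (fun x j => (x j : α)) ?_ ?_ ?_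
  · intro x hx
    exact mem_copies.2 ⟨Subtype.val_injective.comp (mem_filter.1 hx).2, fun j => (x j).2⟩
  · intro x _ y _ hxy
    exact funext fun j => Subtype.ext (congrFun hxy j)
  · intro x hx
    obtain ⟨x_injective, hx⟩ := mem_copies.1 hx
    refine ⟨fun j => ⟨x j, hx j⟩, mem_filter.2 ⟨mem_univ _, fun i j hij => ?_⟩, rfl⟩
    exact x_injective (congrArg Subtype.val hij)

end FixedPoints

section Cycles

variable {α : Type*} {m : ℕ}

theorem apply_eq_iterate_of_finRotate {f : α → α} {x : Fin (m + 1) → α}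
    (hx : ∀ j, f (x j) = x (finRotate (m + 1) j)) (j : Fin (m + 1)) : x j = f^[j] (x 0) := by
  induction j using Fin.induction with
  | zero => rfl
  | succ j ih =>
    rw [Fin.val_succ, Function.iterate_succ_apply', ← Fin.val_castSucc, ← ih, hx,
      finRotate_apply, Fin.coeSucc_eq_succ]

theorem minimalPeriod_of_finRotate {f : α → α} {x : Fin (m + 1) → α} (x_injective : x.Injective)
    (hx : ∀ j, f (x j) = x (finRotate (m + 1) j)) : Function.minimalPeriod f (x 0) = m + 1 := by
  have x_last : x (Fin.last m) = f^[m] (x 0) := apply_eq_iterate_of_finRotate hx (Fin.last m)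
  have hperiod : Function.IsPeriodicPt f (m + 1) (x 0) := by
    rw [Function.IsPeriodicPt, Function.IsFixedPt, Function.iterate_succ_apply', ← x_last, hx,
      finRotate_last]
  refine le_antisymm (hperiod.minimalPeriod_le m.succ_pos) ?_
  by_contra! hlt
  have eq_zero := x_injective
    ((apply_eq_iterate_of_finRotate hx ⟨_, hlt⟩).trans Function.iterate_minimalPeriod)
  exact (hperiod.minimalPeriod_pos m.succ_pos).ne' (congrArg Fin.val eq_zero)

theorem iterate_injective_of_minimalPeriod {f : α → α} {u : α}
    (hu : Function.minimalPeriod f u = m) :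
    Function.Injective fun j : Fin m => f^[j] u := by
  intro i j hij
  have mem_Iio (l : Fin m) : (l : ℕ) ∈ Set.Iio (Function.minimalPeriod f u) := hu ▸ l.isLt
  exact Fin.ext (Function.iterate_injOn_Iio_minimalPeriod (mem_Iio i) (mem_Iio j) hij)

theorem apply_iterate_eq_iterate_finRotate {f : α → α} {u : α}
    (hu : Function.minimalPeriod f u = m + 1) (j : Fin (m + 1)) :
    f (f^[j] u) = f^[finRotate (m + 1) j] u := by
  rw [← Function.iterate_succ_apply' f]
  induction j using Fin.lastCases with
  | last =>
    rw [finRotate_last, Fin.val_last, Fin.val_zero, Function.iterate_zero_apply,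
      Nat.succ_eq_add_one, ← hu, Function.iterate_minimalPeriod]
  | cast j => rw [finRotate_apply, Fin.coeSucc_eq_succ, Fin.val_succ, Fin.val_castSucc]

variable [Fintype α] [DecidableEq α] (τ : Perm α)

theorem card_copies_finRotate_eq_card_minimalPeriod :
    #(copies (finRotate (m + 1)) id τ) = #{u | Function.minimalPeriod τ u = m + 1} := by
  refine card_nbij' (fun x => x 0) (fun u j => τ^[j] u) ?_ ?_ ?_ ?_
  · intro x hx
    obtain ⟨x_injective, hx⟩ := mem_copies.1 hx
    exact mem_filter.2 ⟨mem_univ _, minimalPeriod_of_finRotate x_injective hx⟩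
  · intro u hu
    obtain ⟨-, hu⟩ := mem_filter.1 hu
    exact mem_copies.2
      ⟨iterate_injective_of_minimalPeriod hu, apply_iterate_eq_iterate_finRotate hu⟩
  · intro x hx
    exact funext fun j => (apply_eq_iterate_of_finRotate (mem_copies.1 hx).2 j).symm
  · exact fun u _ => rfl

theorem minimalPeriod_eq_orderOf_cycleOf (u : α) :
    Function.minimalPeriod τ u = orderOf (τ.cycleOf u) := by
  refine Nat.dvd_right_iff_eq.1 fun l => ?_
  rw [orderOf_dvd_iff_pow_eq_one, ← Function.isPeriodicPt_iff_minimalPeriod_dvd,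
    Function.IsPeriodicPt, Function.IsFixedPt, Perm.iterate_eq_pow]
  by_cases hu : τ u = u
  · rw [(Perm.cycleOf_eq_one_iff τ).2 hu, one_pow]
    exact iff_of_true (Perm.pow_apply_eq_self_of_apply_eq_self hu l) rfl
  · rw [(Perm.isCycle_cycleOf τ hu).pow_eq_one_iff' (x := u), Perm.cycleOf_pow_apply_self]
    rwa [Perm.cycleOf_apply_self]

variable {k : ℕ}

theorem minimalPeriod_eq_iff (hk : 1 < k) (u : α) :
    Function.minimalPeriod τ u = k ↔ u ∈ τ.support ∧ #(τ.cycleOf u).support = k := by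
  by_cases hu : u ∈ τ.support
  · rw [minimalPeriod_eq_orderOf_cycleOf, (Perm.isCycle_cycleOf τ (Perm.mem_support.1 hu)).orderOf,
      and_iff_right hu]
  · have period_one : Function.minimalPeriod τ u = 1 :=
      Function.minimalPeriod_eq_one_iff_isFixedPt.2 (Perm.notMem_support.1 hu)
    exact iff_of_false (period_one.trans_ne hk.ne) fun h => hu h.1

theorem count_partition (hk : 1 < k) :
    τ.partition.parts.count k = #{c ∈ τ.cycleFactorsFinset | #c.support = k} := by
  rw [Perm.parts_partition, Multiset.count_add, Multiset.count_replicate, if_neg hk.ne, add_zero,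
    Perm.cycleType_def, Multiset.count_map]
  simp only [eq_comm, Function.comp_apply]
  rfl

theorem card_minimalPeriod (hk : 1 < k) :
    #{u | Function.minimalPeriod τ u = k} = k * τ.partition.parts.count k := by
  simp only [minimalPeriod_eq_iff τ hk]
  have cycleOf_mem : ∀ u ∈ ({u | u ∈ τ.support ∧ #(τ.cycleOf u).support = k} : Finset α),
      τ.cycleOf u ∈ ({c ∈ τ.cycleFactorsFinset | #c.support = k} : Finset (Perm α)) := by
    intro u hu
    rw [mem_filter_univ] at hu
    exact mem_filter.2 ⟨Perm.cycleOf_mem_cycleFactorsFinset_iff.2 hu.1, hu.2⟩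
  have card_fiber : ∀ c ∈ ({c ∈ τ.cycleFactorsFinset | #c.support = k} : Finset (Perm α)),
      #{u ∈ ({u | u ∈ τ.support ∧ #(τ.cycleOf u).support = k} : Finset α) | τ.cycleOf u = c} =
        k := by
    intro c hc
    obtain ⟨hcτ, hck⟩ := mem_filter.1 hc
    refine Eq.trans (congrArg card ?_) hck
    ext u
    rw [mem_filter, mem_filter_univ]
    constructor
    · rintro ⟨⟨hu, -⟩, rfl⟩
      exact Perm.mem_support_cycleOf_iff.2 ⟨Perm.SameCycle.refl τ u, hu⟩
    · intro hu
      obtain rfl := Perm.cycle_is_cycleOf hu hcτ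
      exact ⟨⟨Perm.mem_cycleFactorsFinset_support_le hcτ hu, hck⟩, rfl⟩
  rw [card_eq_sum_card_fiberwise cycleOf_mem, sum_congr rfl card_fiber, sum_const, smul_eq_mul,
    count_partition τ hk, mul_comm]

theorem card_copies_finRotate (hk : 1 < k) :
    #(copies (finRotate k) id τ) = k * τ.partition.parts.count k := by
  rw [← card_minimalPeriod τ hk]
  obtain ⟨m, rfl⟩ := Nat.exists_eq_add_of_lt hk
  exact card_copies_finRotate_eq_card_minimalPeriod τ

end Cycles

section ConjInvariant

variable {n : ℕ} {s : Finset (Perm (Fin n))}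

theorem sum_card_copies_eq {k l N : ℕ} (hs : ∀ τ ∈ s, ∀ σ : Perm (Fin n), σ * τ * σ⁻¹ ∈ s)
    (hl : l ≤ n) {c : Perm (Fin l)} (hN : ∀ τ ∈ s, #(copies c id τ) = N) (e : Fin k ↪ Fin n) :
    (∑ τ ∈ s, #(copies c e (τ ∘ e)) : ℚ) =
      #s * (k.descFactorial l * N / n.descFactorial l) := by
  have average := congrArg (Nat.cast : ℕ → ℚ) (descFactorial_mul_sum_card_copies hs c e)
  rw [sum_congr rfl hN] at average
  simp only [Fintype.card_fin, sum_const, smul_eq_mul] at average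
  push_cast at average
  have descFactorial_ne_zero : (n.descFactorial l : ℚ) ≠ 0 := by
    exact_mod_cast (Nat.descFactorial_pos.2 hl).ne'
  rw [mul_div_assoc', eq_div_iff descFactorial_ne_zero]
  linear_combination average

theorem card_strictMono_window_add_sum_card_copies
    (hs : ∀ τ ∈ s, ∀ σ : Perm (Fin n), σ * τ * σ⁻¹ ∈ s) (i : Fin (n + 1 - 3)) :
    36 * #(s.filter fun τ : Perm (Fin n) => StrictMono (τ ∘ window i)) +
        (3 * ∑ τ ∈ s, #(copies (finRotate 2) (window i) (τ ∘ window i)) +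
          2 * ∑ τ ∈ s, #(copies (finRotate 3) (window i) (τ ∘ window i))) =
      6 * #s +
        (3 * ∑ τ ∈ s, #(copies (1 : Perm (Fin 2)) (window i) (τ ∘ window i)) +
          2 * ∑ τ ∈ s, #(copies (1 : Perm (Fin 3)) (window i) (τ ∘ window i))) := by
  have relabelings := factorial_mul_card_strictMono hs (window i)
  have identity := sum_congr (s₁ := s) rfl fun τ _ =>
    card_strictMono_relabel_window i (τ.injective.comp (window i).injective)
  simp only [sum_add_distrib, ← mul_sum, sum_const, ← relabelings, smul_eq_mul] at identity
  rw [← mul_assoc, mul_comm (#s) 6] at identity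
  exact identity

end ConjInvariant

section ConjClass

variable {n : ℕ}

theorem conj_mem_conjClass {lam : n.Partition} :
    ∀ τ ∈ conjClass n lam, ∀ σ : Perm (Fin n), σ * τ * σ⁻¹ ∈ conjClass n lam := by
  intro τ hτ σ
  have partition_conj : τ.partition = (σ * τ * σ⁻¹).partition :=
    Perm.partition_eq_of_isConj.1 (isConj_iff.2 ⟨σ, rfl⟩)
  rw [conjClass, mem_filter_univ] at hτ ⊢
  rw [← hτ, partition_conj]

theorem cast_descFactorial_three (a : ℕ) :
    (a.descFactorial 3 : ℚ) = a * (a - 1) * (a - 2) := by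
  rcases a with _ | _ | a
  · simp
  · simp
  · simp only [Nat.descFactorial_succ, Nat.descFactorial_zero]
    push_cast
    ring

theorem card_strictMono_window (hn : 3 ≤ n) (lam : n.Partition) (i : Fin (n + 1 - 3)) {p q r : ℚ}
    (hp : p = lam.parts.count 1) (hq : q = lam.parts.count 2) (hr : r = lam.parts.count 3) :
    (#((conjClass n lam).filter fun τ : Perm (Fin n) => StrictMono (τ ∘ window i)) : ℚ) =
      #(conjClass n lam) * (1 / 6 + (p * (p - 1) - 2 * q) / (n * (n - 1)) / 2 +
        (p * (p - 1) * (p - 2) - 3 * r) / (n * (n - 1) * (n - 2)) / 3) := by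
  have parts_eq {τ : Perm (Fin n)} (hτ : τ ∈ conjClass n lam) : τ.partition.parts = lam.parts :=
    (mem_filter.1 hτ).2
  have fixed (l : ℕ) : ∀ τ ∈ conjClass n lam,
      #(copies (1 : Perm (Fin l)) id τ) = (lam.parts.count 1).descFactorial l := fun τ hτ => by
    rw [card_copies_one, parts_eq hτ, Fintype.card_fin]
  have cycles {l : ℕ} (hl : 1 < l) : ∀ τ ∈ conjClass n lam,
      #(copies (finRotate l) id τ) = l * lam.parts.count l := fun τ hτ => by
    rw [card_copies_finRotate τ hl, parts_eq hτ]
  have identity := congrArg (Nat.cast : ℕ → ℚ)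
    (card_strictMono_window_add_sum_card_copies (conj_mem_conjClass (lam := lam)) i)
  push_cast at identity
  rw [sum_card_copies_eq conj_mem_conjClass (by omega) (fixed 2),
    sum_card_copies_eq conj_mem_conjClass hn (fixed 3),
    sum_card_copies_eq conj_mem_conjClass (by omega) (cycles one_lt_two),
    sum_card_copies_eq conj_mem_conjClass hn (cycles (by omega))] at identity
  simp only [Nat.cast_descFactorial_two, cast_descFactorial_three, Nat.cast_mul, Nat.cast_ofNat,
    ← hp, ← hq, ← hr] at identity
  linear_combination identity / 36

end ConjClass

section Occurrences

variable {n : ℕ}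

theorem strictMono_comp_window_iff {β : Type*} [Preorder β] (f : Fin n → β) (i : Fin (n + 1 - 3)) :
    StrictMono (f ∘ window i) ↔
      f (window i 0) < f (window i 1) ∧ f (window i 1) < f (window i 2) := by
  rw [Fin.strictMono_iff_lt_succ, Fin.forall_fin_two]
  rfl

theorem card_consecutive_increasing (π : Perm (Fin n)) :
    #{x : Fin n × Fin n × Fin n | (x.1 : ℕ) + 1 = x.2.1 ∧ (x.2.1 : ℕ) + 1 = x.2.2 ∧
        π x.1 < π x.2.1 ∧ π x.2.1 < π x.2.2} =
      #{i : Fin (n + 1 - 3) | StrictMono (π ∘ window i)} := by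
  symm
  simp only [strictMono_comp_window_iff]
  refine card_nbij (fun i => (window i 0, window i 1, window i 2)) ?_ ?_ ?_
  · intro i hi
    exact mem_filter.2 ⟨mem_univ _, rfl, rfl, (mem_filter.1 hi).2⟩
  · intro i _ j _ hij
    exact Fin.ext (congrArg (fun x => (x.1 : ℕ)) hij)
  · rintro ⟨a, b, c⟩ hx
    obtain ⟨-, hab, hbc, hincreasing⟩ := mem_filter.1 hx
    dsimp only at hab hbc hincreasing
    let i : Fin (n + 1 - 3) := ⟨a, by omega⟩
    have window_zero : window i 0 = a := rfl
    have window_one : window i 1 = b := Fin.ext hab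
    have window_two : window i 2 = c := Fin.ext (by rw [← hbc, ← hab]; rfl)
    refine ⟨i, mem_filter.2 ⟨mem_univ _, ?_⟩, ?_⟩
    · rwa [window_zero, window_one, window_two]
    · simp only [window_zero, window_one, window_two]

theorem sum_card_consecutive_increasing (s : Finset (Perm (Fin n))) :
    ∑ π ∈ s, #{x : Fin n × Fin n × Fin n | (x.1 : ℕ) + 1 = x.2.1 ∧ (x.2.1 : ℕ) + 1 = x.2.2 ∧
        π x.1 < π x.2.1 ∧ π x.2.1 < π x.2.2} =
      ∑ i : Fin (n + 1 - 3), #(s.filter fun π : Perm (Fin n) => StrictMono (π ∘ window i)) := by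
  simp only [card_consecutive_increasing]
  exact sum_card_bipartiteAbove_eq_sum_card_bipartiteBelow _

end Occurrences

theorem stmt11 (n : ℕ) (hn : 3 ≤ n) (lam : n.Partition)
    (p q r X₁ X₂ X₃ X₄ : ℚ)
    (hp : p = (lam.parts.count 1 : ℚ)) (hq : q = (lam.parts.count 2 : ℚ))
    (hr : r = (lam.parts.count 3 : ℚ))
    (hX1 : X₁ = p - 1) (hX2 : X₂ = (p - 1) * (p - 2) / 2 + q - 1)
    (hX3 : X₃ = (p - 1) * (p - 2) / 2 - q)
    (hX4 : X₄ = (p - 1) * (p - 2) * (p - 3) / 3 - p - r + 2) :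
    (∑ π ∈ conjClass n lam,
      ((((Finset.univ : Finset (Fin n × Fin n × Fin n)).filter fun x =>
          (x.1 : ℕ) + 1 = (x.2.1 : ℕ) ∧ (x.2.1 : ℕ) + 1 = (x.2.2 : ℕ) ∧ π x.1 < π x.2.1 ∧ π x.2.1 < π x.2.2).card : ℚ)))
    = ((conjClass n lam).card : ℚ) *
      (((n : ℚ) - 2) / 6 + X₁ / (n : ℚ) + X₂ / ((n : ℚ) * ((n : ℚ) - 1))
        + X₃ / (n : ℚ) + X₄ / ((n : ℚ) * ((n : ℚ) - 1))) := by
  have card_windows : ((n + 1 - 3 : ℕ) : ℚ) = n - 2 := by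
    rw [Nat.cast_sub (by omega)]
    push_cast
    ring
  have three_le : (3 : ℚ) ≤ n := by exact_mod_cast hn
  have n_ne_zero : (n : ℚ) ≠ 0 := by linarith
  have n_sub_one_ne_zero : (n : ℚ) - 1 ≠ 0 := by linarith
  have n_sub_two_ne_zero : (n : ℚ) - 2 ≠ 0 := by linarith
  rw [← Nat.cast_sum, sum_card_consecutive_increasing, Nat.cast_sum]
  simp only [card_strictMono_window hn lam _ hp hq hr, sum_const, card_univ, Fintype.card_fin,
    nsmul_eq_mul, card_windows]
  rw [hX1, hX2, hX3, hX4]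
  field_simp
  ring
end

section
/- Let n ≥ 3 and let λ be a partition of n. Then both Σ_{π ∈ C_λ} occ₍₂₃₁₎(π) and Σ_{π ∈ C_λ} occ₍₃₁₂₎(π) are equal to |C_λ| · ( (n−2)/6 − X₁/(2n) − X₂/(2n(n−1)) + X₃/(2n(n−1)) − X₄/(2n(n−1)) ), where occ₍₂₃₁₎(π) = #{i : 1 ≤ i ≤ n−2, π(i+2) < π(i) < π(i+1)} and occ₍₃₁₂₎(π) = #{i : 1 ≤ i ≤ n−2, π(i+1) < π(i+2) < π(i)} count occurrences of the consecutive (vincular) patterns (231) and (312) in π. -/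
open Equiv Finset

/-!
Let `C` be a conjugacy class and `a, b, c` three consecutive positions. Conjugating by the six
permutations of the block `{a, b, c}` preserves `C`. A value outside the block compares in the same
way with all three of its members, so if at most one of `π a`, `π b`, `π c` lies in the block, the
six conjugates arrange the three values in all possible orders, and exactly two of these orders are
231 or 312. The permutations for which at least two values lie in the block contribute a correction
depending only on which of `a, b, c` is mapped to which. By conjugation invariance the mean of this
correction over `C` is the same at every triple of distinct points, so it is found by counting, for
one `π ∈ C`, the triples that are fixed, form a path `x ↦ y ↦ z`, and so on; these counts are
polynomials in the numbers of cycles of length 1, 2 and 3. Finally, conjugation by the reversal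
`i ↦ n + 1 - i` exchanges 231 and 312, so the two patterns share the total equally.
-/

section Averaging

/-- A finite set of group elements that is a union of conjugacy classes. -/
def ConjInvariant {G : Type*} [Group G] (C : Finset G) : Prop :=
  ∀ σ, ∀ π ∈ C, σ * π * σ⁻¹ ∈ C

theorem sum_conj {G M : Type*} [Group G] [AddCommMonoid M] {C : Finset G} (hC : ConjInvariant C)
    (f : G → M) (σ : G) :
    ∑ π ∈ C, f (σ * π * σ⁻¹) = ∑ π ∈ C, f π :=
  sum_nbij' (fun π => σ * π * σ⁻¹) (fun π => σ⁻¹ * π * σ) (hC σ)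
    (fun π hπ => by simpa using hC σ⁻¹ π hπ) (by simp [mul_assoc]) (by simp [mul_assoc]) (by simp)

theorem descFactorial_nsmul_sum_embedding {α M : Type*} [Fintype α] [AddCommMonoid M]
    {C : Finset (Perm α)} (hC : ConjInvariant C) {k : ℕ}
    (f : Perm α → (Fin k ↪ α) → M) (hf : ∀ σ π e, f (σ * π * σ⁻¹) (σ • e) = f π e)
    (e : Fin k ↪ α) :
    (Fintype.card α).descFactorial k • ∑ π ∈ C, f π e = ∑ π ∈ C, ∑ e', f π e' := by
  classical
  have sum_eq (e' : Fin k ↪ α) : ∑ π ∈ C, f π e' = ∑ π ∈ C, f π e := by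
    obtain ⟨σ, rfl⟩ := (Perm.isMultiplyPretransitive α k).exists_smul_eq e e'
    rw [← sum_conj hC (fun π => f π (σ • e)) σ]
    exact sum_congr rfl fun π _ => hf σ π e
  rw [sum_comm, sum_congr rfl fun e' _ => sum_eq e', sum_const, card_univ,
    Fintype.card_embedding_eq, Fintype.card_fin]

end Averaging

section CycleCounts

variable {α : Type*} [Fintype α] [DecidableEq α] (π : Perm α)

theorem card_support_cycleOf_eq_prime_iff {k : ℕ} (hk : k.Prime) {x : α} (hx : π x ≠ x) :
    #(π.cycleOf x).support = k ↔ (π ^ k) x = x := by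
  have := Fact.mk hk
  have hcycle := π.isCycle_cycleOf hx
  rw [← hcycle.orderOf, orderOf_eq_prime_iff, and_iff_left hcycle.ne_one,
    hcycle.pow_eq_one_iff' (by rwa [Perm.cycleOf_apply_self]), Perm.cycleOf_pow_apply_self]

theorem filter_card_support_cycleOf_eq_biUnion (k : ℕ) :
    {x ∈ π.support | #(π.cycleOf x).support = k} =
      {c ∈ π.cycleFactorsFinset | #c.support = k}.biUnion Perm.support := by
  ext x
  simp only [mem_biUnion, mem_filter]
  constructor
  · rintro ⟨hx, hcard⟩
    exact ⟨π.cycleOf x, ⟨Perm.cycleOf_mem_cycleFactorsFinset_iff.2 hx, hcard⟩, by simpa using hx⟩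
  · rintro ⟨c, ⟨hc, hcard⟩, hx⟩
    rw [← Perm.cycle_is_cycleOf hx hc]
    exact ⟨Perm.mem_cycleFactorsFinset_support_le hc hx, hcard⟩

theorem card_filter_card_support_cycleOf (k : ℕ) :
    #{x ∈ π.support | #(π.cycleOf x).support = k} = k * π.cycleType.count k := by
  have count_eq : π.cycleType.count k = #{c ∈ π.cycleFactorsFinset | #c.support = k} := by
    rw [Perm.cycleType_def, Multiset.count_map, card_def, filter_val]
    simp only [Function.comp_apply, eq_comm]
  rw [filter_card_support_cycleOf_eq_biUnion, card_biUnion, count_eq, mul_comm]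
  · exact sum_const_nat fun c hc => (mem_filter.1 hc).2
  · intro c hc d hd hcd
    exact (π.cycleFactorsFinset_pairwise_disjoint (mem_filter.1 hc).1 (mem_filter.1 hd).1
      hcd).disjoint_support

theorem card_filter_pow_prime_apply_eq {k : ℕ} (hk : k.Prime) :
    #{x | π x ≠ x ∧ (π ^ k) x = x} = k * π.partition.parts.count k := by
  rw [Perm.parts_partition, Multiset.count_add, Multiset.count_replicate, if_neg hk.one_lt.ne,
    add_zero, ← card_filter_card_support_cycleOf]
  congr 1
  ext x
  simp +contextual [card_support_cycleOf_eq_prime_iff π hk]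

theorem card_filter_apply_eq_s14 : #{x | π x = x} = π.partition.parts.count 1 := by
  have one_notMem : 1 ∉ π.cycleType := fun h => (Perm.one_lt_of_mem_cycleType h).false
  rw [Perm.parts_partition, Multiset.count_add, Multiset.count_eq_zero_of_notMem one_notMem,
    zero_add, Multiset.count_replicate_self, ← card_compl]
  congr 1
  ext x
  simp

theorem card_filter_sq_apply_ne :
    (#{x | π x ≠ x ∧ (π ^ 2) x ≠ x} : ℤ) =
      Fintype.card α - π.partition.parts.count 1 - 2 * π.partition.parts.count 2 := by
  have split_sq := card_filter_add_card_filter_not (s := {x | π x ≠ x}) fun x => (π ^ 2) x = x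
  have split_fixed := card_filter_add_card_filter_not (s := univ) fun x => π x = x
  rw [filter_filter, filter_filter, card_filter_pow_prime_apply_eq π Nat.prime_two] at split_sq
  rw [card_filter_apply_eq_s14, card_univ] at split_fixed
  simp only [ne_eq] at split_sq ⊢
  omega

end CycleCounts

section TripleCounts

theorem exists_fin_three_embedding {α : Type*} {a b c : α} (hab : a ≠ b) (hac : a ≠ c)
    (hbc : b ≠ c) : ∃ e : Fin 3 ↪ α, e 0 = a ∧ e 1 = b ∧ e 2 = c :=
  ⟨⟨![a, b, c], by simp [Function.Injective, Fin.forall_fin_succ, *, Ne.symm]⟩, rfl, rfl, rfl⟩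

theorem fin_three_embedding_ext {α : Type*} {e e' : Fin 3 ↪ α} (h₀ : e 0 = e' 0) (h₁ : e 1 = e' 1)
    (h₂ : e 2 = e' 2) : e = e' :=
  Function.Embedding.ext fun i => by fin_cases i <;> assumption

variable {α : Type*} [Fintype α] [DecidableEq α]

theorem card_embedding_forall_mem {k : ℕ} (s : Finset α) :
    #{e : Fin k ↪ α | ∀ i, e i ∈ s} = (#s).descFactorial k := by
  have card_embedding : Fintype.card (Fin k ↪ s) = (#s).descFactorial k := by simp
  rw [← card_embedding, ← card_univ]
  refine (card_nbij (fun e : Fin k ↪ s => e.trans (Function.Embedding.subtype _)) ?_ ?_ ?_).symm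
  · simp [Set.MapsTo]
  · intro e _ e' _ h
    ext i
    exact DFunLike.congr_fun h i
  · intro e he
    exact ⟨e.codRestrict _ (mem_filter.1 he).2, mem_coe.2 (mem_univ _), rfl⟩

variable (π : Perm α)

theorem card_embedding_fixed :
    #{e : Fin 3 ↪ α | π (e 0) = e 0 ∧ π (e 1) = e 1 ∧ π (e 2) = e 2} =
      (#{x | π x = x}).descFactorial 3 := by
  simpa [Fin.forall_fin_succ] using card_embedding_forall_mem (k := 3) {x | π x = x}

theorem card_embedding_fixed_arc :
    #{e : Fin 3 ↪ α | π (e 0) = e 0 ∧ π (e 1) = e 2} = #{x | π x = x} * #{x | ¬π x = x} := by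
  rw [← card_product]
  refine card_nbij (fun e => (e 0, e 1)) ?_ ?_ ?_
  · intro e he
    have := e.injective.ne (show (2 : Fin 3) ≠ 1 by decide)
    simp_all
  · intro e he e' he' h
    simp only [coe_filter, mem_univ, true_and, Set.mem_ofPred_eq, Prod.mk.injEq] at he he' h
    exact fin_three_embedding_ext h.1 h.2 (by rw [← he.2, ← he'.2, h.2])
  · rintro ⟨x, y⟩ hxy
    simp only [coe_product, coe_filter, mem_univ, true_and, Set.mem_prod, Set.mem_ofPred_eq] at hxy
    obtain ⟨hx, hy⟩ := hxy
    obtain ⟨e, h₀, h₁, h₂⟩ := exists_fin_three_embedding (a := x) (b := y) (c := π y)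
      (by rintro rfl; exact hy hx) (fun h => hy (h.symm.trans (π.injective (hx.trans h))))
      (Ne.symm hy)
    exact ⟨e, by simp [*], by simp [*]⟩

theorem card_embedding_path :
    #{e : Fin 3 ↪ α | π (e 0) = e 1 ∧ π (e 1) = e 2} = #{x | π x ≠ x ∧ (π ^ 2) x ≠ x} := by
  refine card_nbij (fun e => e 0) ?_ ?_ ?_
  · intro e he
    have := e.injective.ne (show (1 : Fin 3) ≠ 0 by decide)
    have := e.injective.ne (show (2 : Fin 3) ≠ 0 by decide)
    simp_all [pow_succ]
  · intro e he e' he' h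
    simp only [coe_filter, mem_univ, true_and, Set.mem_ofPred_eq] at he he' h
    apply fin_three_embedding_ext <;> grind
  · intro x hx
    simp only [coe_filter, mem_univ, true_and, Set.mem_ofPred_eq, pow_two, Perm.mul_apply] at hx
    obtain ⟨e, h₀, h₁, h₂⟩ := exists_fin_three_embedding hx.1.symm hx.2.symm
      (π.injective.ne hx.1.symm)
    exact ⟨e, by simp [*], h₀⟩

theorem card_embedding_cycle :
    #{e : Fin 3 ↪ α | π (e 0) = e 1 ∧ π (e 1) = e 2 ∧ π (e 2) = e 0} =
      #{x | π x ≠ x ∧ (π ^ 3) x = x} := by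
  refine card_nbij (fun e => e 0) ?_ ?_ ?_
  · intro e he
    have := e.injective.ne (show (1 : Fin 3) ≠ 0 by decide)
    simp_all [pow_succ]
  · intro e he e' he' h
    simp only [coe_filter, mem_univ, true_and, Set.mem_ofPred_eq] at he he' h
    apply fin_three_embedding_ext <;> grind
  · intro x hx
    simp only [coe_filter, mem_univ, true_and, Set.mem_ofPred_eq, pow_succ, pow_zero, one_mul,
      Perm.mul_apply] at hx
    obtain ⟨e, h₀, h₁, h₂⟩ := exists_fin_three_embedding hx.1.symm
      (fun h => hx.1 (by rw [h, hx.2, ← h])) (π.injective.ne hx.1.symm)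
    exact ⟨e, by simp [*], h₀⟩

end TripleCounts

section Defect

variable {α : Type*} [DecidableEq α]

/-- For a permutation sending the consecutive points `a, b, c` to `x, y, z`: three times the
correction to the mean `1 / 3` of the number of occurrences of 231 or 312 at `a, b, c`. It is exact
only after summing over the conjugates of the permutation by the symmetric group of `{a, b, c}`;
among the functions with this property it is one with few terms. -/
def blockDefect (a b c x y z : α) : ℤ :=
  3 * (if x = b ∧ y = c then 1 else 0) - 3 * (if x = a ∧ y = c then 1 else 0)
    + (if x = b ∧ y = c ∧ z = a then 1 else 0) - (if x = a ∧ y = b ∧ z = c then 1 else 0)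

theorem blockDefect_map {β : Type*} [DecidableEq β] (φ : α ↪ β) (a b c x y z : α) :
    blockDefect (φ a) (φ b) (φ c) (φ x) (φ y) (φ z) = blockDefect a b c x y z := by
  simp only [blockDefect, φ.apply_eq_iff_eq]

/-- The sum of `blockDefect` over all triples of distinct points, for a permutation of `n` points
with `p`, `q`, `r` cycles of length 1, 2, 3. -/
def defectTotal (n p q r : ℤ) : ℤ :=
  3 * (n - p - 2 * q) - 3 * (p * (n - p)) + 3 * r - p * (p - 1) * (p - 2)

theorem cast_descFactorial_three_s14 (n : ℕ) : (n.descFactorial 3 : ℤ) = n * (n - 1) * (n - 2) := by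
  rw [← descPochhammer_eval_eq_descFactorial]
  simp [descPochhammer_succ_right]

theorem sum_embedding_blockDefect [Fintype α] (π : Perm α) :
    ∑ e : Fin 3 ↪ α, blockDefect (e 0) (e 1) (e 2) (π (e 0)) (π (e 1)) (π (e 2)) =
      defectTotal (Fintype.card α) (π.partition.parts.count 1) (π.partition.parts.count 2)
        (π.partition.parts.count 3) := by
  have card_moved := card_filter_add_card_filter_not (s := univ) fun x => π x = x
  rw [card_univ] at card_moved
  simp only [blockDefect, defectTotal, sum_add_distrib, sum_sub_distrib, ← mul_sum, sum_boole,
    card_embedding_path, card_embedding_fixed_arc, card_embedding_cycle, card_embedding_fixed,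
    card_filter_sq_apply_ne, card_filter_pow_prime_apply_eq π Nat.prime_three,
    cast_descFactorial_three_s14, ← card_filter_apply_eq_s14, ← card_moved]
  push_cast
  ring

end Defect

section Block

variable {α : Type*} [LinearOrder α]

/-- The number of the patterns 231 and 312 that the word `x y z` has, which is 0 or 1. -/
def patternCount (x y z : α) : ℤ :=
  (if z < x ∧ x < y then 1 else 0) + (if y < z ∧ z < x then 1 else 0)

/-- Three times the deviation of `patternCount x y z` from its corrected mean at the block
`a, b, c`. -/
def patternExcess (a b c x y z : α) : ℤ := 3 * patternCount x y z - 1 - blockDefect a b c x y z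

/-- The sum of `f (ρ a) (ρ b) (ρ c)` over the six conjugates `ρ` of a permutation `π` by the
permutations of `{a, b, c}`, in terms of the values `x = π a`, `y = π b`, `z = π c`. -/
def blockConjSum (f : α → α → α → ℤ) (a b c x y z : α) : ℤ :=
  f x y z + f (swap a b y) (swap a b x) (swap a b z) + f (swap b c x) (swap b c z) (swap b c y)
    + f (swap a c z) (swap a c y) (swap a c x)
    + f (swap a b (swap b c z)) (swap a b (swap b c x)) (swap a b (swap b c y))
    + f (swap b c (swap a b y)) (swap b c (swap a b z)) (swap b c (swap a b x))

theorem sum_blockConjSum {C : Finset (Perm α)} (hC : ConjInvariant C)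
    (f : α → α → α → ℤ) {a b c : α} (hab : a ≠ b) (hac : a ≠ c) (hbc : b ≠ c) :
    ∑ π ∈ C, blockConjSum f a b c (π a) (π b) (π c) = 6 * ∑ π ∈ C, f (π a) (π b) (π c) := by
  have conj (σ : Perm α) : ∑ π ∈ C, f (σ (π (σ⁻¹ a))) (σ (π (σ⁻¹ b))) (σ (π (σ⁻¹ c))) =
      ∑ π ∈ C, f (π a) (π b) (π c) := sum_conj hC (fun π => f (π a) (π b) (π c)) σ
  have conj_ab := conj (swap a b)
  have conj_bc := conj (swap b c)
  have conj_ac := conj (swap a c)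
  have conj_ab_bc := conj (swap a b * swap b c)
  have conj_bc_ab := conj (swap b c * swap a b)
  simp only [mul_inv_rev, swap_inv, Perm.mul_apply, swap_apply_left, swap_apply_right,
    swap_apply_of_ne_of_ne hab hac, swap_apply_of_ne_of_ne hac.symm hbc.symm,
    swap_apply_of_ne_of_ne hab.symm hbc]
    at conj_ab conj_bc conj_ac conj_ab_bc conj_bc_ab
  simp only [blockConjSum, sum_add_distrib, conj_ab, conj_bc, conj_ac, conj_ab_bc, conj_bc_ab]
  ring

theorem blockConjSum_patternExcess_map {β : Type*} [LinearOrder β] (φ : α ↪o β) (a b c x y z : α) :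
    blockConjSum (patternExcess (φ a) (φ b) (φ c)) (φ a) (φ b) (φ c) (φ x) (φ y) (φ z) =
      blockConjSum (patternExcess a b c) a b c x y z := by
  have defect_map := blockDefect_map φ.toEmbedding
  simp only [RelEmbedding.coe_toEmbedding] at defect_map
  simp only [blockConjSum, patternExcess, patternCount, φ.injective.swap_apply, φ.lt_iff_lt,
    defect_map]

theorem blockConjSum_patternExcess_fin {k : ℕ} (hk : k ≤ 6) : ∀ a b : Fin k, a.val + 1 = b →
    ∀ c : Fin k, b.val + 1 = c → ∀ x y : Fin k, x ≠ y → ∀ z, x ≠ z → y ≠ z →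
      blockConjSum (patternExcess a b c) a b c x y z = 0 := by
  interval_cases k <;> decide +kernel

-- Only the relative order of the six points matters, so they may be taken in `Fin k` with `k ≤ 6`.
theorem blockConjSum_patternExcess_eq_zero {a b c x y z : α} (hab : a ⋖ b) (hbc : b ⋖ c)
    (hxy : x ≠ y) (hxz : x ≠ z) (hyz : y ≠ z) :
    blockConjSum (patternExcess a b c) a b c x y z = 0 := by
  obtain ⟨k, hk, φ, hφ⟩ : ∃ k ≤ 6, ∃ φ : Fin k ↪o α,
      ∀ t ∈ ({a, b, c, x, y, z} : Finset α), ∃ i, φ i = t :=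
    ⟨_, card_le_six, orderEmbOfFin _ rfl, fun t ht => by
      rwa [← Set.mem_range, range_orderEmbOfFin, mem_coe]⟩
  simp only [forall_mem_insert, mem_singleton, forall_eq] at hφ
  obtain ⟨⟨a, rfl⟩, ⟨b, rfl⟩, ⟨c, rfl⟩, ⟨x, rfl⟩, ⟨y, rfl⟩, ⟨z, rfl⟩⟩ := hφ
  rw [blockConjSum_patternExcess_map]
  exact blockConjSum_patternExcess_fin hk _ _ (by simpa using hab.of_image φ) _
    (by simpa using hbc.of_image φ) _ _ (ne_of_apply_ne φ hxy) _ (ne_of_apply_ne φ hxz)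
    (ne_of_apply_ne φ hyz)

theorem sum_patternCount [Fintype α] {C : Finset (Perm α)} (hC : ConjInvariant C)
    {s : Multiset ℕ} (hs : ∀ π ∈ C, π.partition.parts = s) {a b c : α} (hab : a ⋖ b) (hbc : b ⋖ c) :
    (Fintype.card α).descFactorial 3 * (3 * ∑ π ∈ C, patternCount (π a) (π b) (π c) - #C) =
      #C * defectTotal (Fintype.card α) (s.count 1) (s.count 2) (s.count 3) := by
  have hac := hab.lt.trans hbc.lt
  have sum_excess : ∑ π ∈ C, patternExcess a b c (π a) (π b) (π c) = 0 := by
    have := sum_blockConjSum hC (patternExcess a b c) hab.lt.ne hac.ne hbc.lt.ne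
    rw [sum_eq_zero fun π _ => blockConjSum_patternExcess_eq_zero hab hbc
      (π.injective.ne hab.lt.ne) (π.injective.ne hac.ne) (π.injective.ne hbc.lt.ne)] at this
    linarith
  have sum_occ : 3 * ∑ π ∈ C, patternCount (π a) (π b) (π c) - #C =
      ∑ π ∈ C, blockDefect a b c (π a) (π b) (π c) := by
    simp only [patternExcess, sum_sub_distrib, ← mul_sum, sum_const, nsmul_eq_mul, mul_one]
      at sum_excess
    linarith
  obtain ⟨e, rfl, rfl, rfl⟩ := exists_fin_three_embedding hab.lt.ne hac.ne hbc.lt.ne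
  rw [sum_occ, ← nsmul_eq_mul, descFactorial_nsmul_sum_embedding hC
    (fun π e => blockDefect (e 0) (e 1) (e 2) (π (e 0)) (π (e 1)) (π (e 2))),
    sum_congr rfl fun π hπ => by rw [sum_embedding_blockDefect, hs π hπ], sum_const, nsmul_eq_mul]
  intro σ π e
  simpa using blockDefect_map σ.toEmbedding _ _ _ _ _ _

end Block

section Fin

variable {n : ℕ}

variable (n) in
/-- The triples of consecutive positions `(i, i + 1, i + 2)`. -/
def consecutiveTriples : Finset (Fin n × Fin n × Fin n) :=
  {t | t.1.val + 1 = t.2.1 ∧ t.2.1.val + 1 = t.2.2}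

theorem card_consecutiveTriples : #(consecutiveTriples n) = n - 2 := by
  rw [← Fintype.card_fin (n - 2), ← card_univ]
  refine (card_nbij (fun i : Fin (n - 2) =>
    (⟨i, by omega⟩, ⟨i + 1, by omega⟩, ⟨i + 2, by omega⟩)) ?_ ?_ ?_).symm
  · simp [Set.MapsTo, consecutiveTriples]
  · intro i _ j _ h
    simpa [Fin.ext_iff] using h
  · rintro ⟨a, b, c⟩ h
    simp only [consecutiveTriples, coe_filter, mem_univ, true_and, Set.mem_ofPred_eq] at h
    exact ⟨⟨a, by omega⟩, by simp, by ext <;> simp <;> omega⟩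

/-- The occurrences of the consecutive pattern 231 in `π`. -/
def occ231 (π : Perm (Fin n)) : Finset (Fin n × Fin n × Fin n) :=
  {t | t.1.val + 1 = t.2.1 ∧ t.2.1.val + 1 = t.2.2 ∧ π t.2.2 < π t.1 ∧ π t.1 < π t.2.1}

/-- The occurrences of the consecutive pattern 312 in `π`. -/
def occ312 (π : Perm (Fin n)) : Finset (Fin n × Fin n × Fin n) :=
  {t | t.1.val + 1 = t.2.1 ∧ t.2.1.val + 1 = t.2.2 ∧ π t.2.1 < π t.2.2 ∧ π t.2.2 < π t.1}

theorem card_occ231_add_card_occ312 (π : Perm (Fin n)) :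
    (#(occ231 π) + #(occ312 π) : ℤ) =
      ∑ t ∈ consecutiveTriples n, patternCount (π t.1) (π t.2.1) (π t.2.2) := by
  simp only [occ231, occ312, patternCount, consecutiveTriples, sum_add_distrib, sum_boole,
    filter_filter, and_assoc]

theorem card_occ312_revPerm_conj (π : Perm (Fin n)) :
    #(occ312 (Fin.revPerm * π * Fin.revPerm⁻¹)) = #(occ231 π) := by
  refine card_nbij' (fun t => (t.2.2.rev, t.2.1.rev, t.1.rev))
    (fun t => (t.2.2.rev, t.2.1.rev, t.1.rev)) ?_ ?_ (by simp [Set.LeftInvOn])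
    (by simp [Set.LeftInvOn])
  all_goals
    rintro ⟨a, b, c⟩ h
    simp only [occ312, occ231, coe_filter, mem_univ, true_and, Set.mem_ofPred_eq, Perm.inv_def,
      Perm.mul_apply, Fin.revPerm_symm, Fin.revPerm_apply, Fin.rev_rev, Fin.rev_lt_rev,
      Fin.val_rev] at h ⊢
    omega

variable {C : Finset (Perm (Fin n))}

theorem sum_card_occ312 (hC : ConjInvariant C) :
    ∑ π ∈ C, #(occ312 π) = ∑ π ∈ C, #(occ231 π) := by
  simp only [← card_occ312_revPerm_conj, sum_conj hC (fun π => #(occ312 π)) Fin.revPerm]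

theorem sum_card_occ231_add_card_occ312 (hC : ConjInvariant C) {s : Multiset ℕ}
    (hs : ∀ π ∈ C, π.partition.parts = s) :
    n.descFactorial 3 * (3 * ∑ π ∈ C, (#(occ231 π) + #(occ312 π) : ℤ) - (n - 2 : ℕ) * #C) =
      (n - 2 : ℕ) * (#C * defectTotal n (s.count 1) (s.count 2) (s.count 3)) := by
  have sum_at_triple : ∀ t ∈ consecutiveTriples n,
      n.descFactorial 3 * (3 * ∑ π ∈ C, patternCount (π t.1) (π t.2.1) (π t.2.2) - #C) =
        #C * defectTotal n (s.count 1) (s.count 2) (s.count 3) := by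
    rintro ⟨a, b, c⟩ ht
    simp only [consecutiveTriples, mem_filter_univ] at ht
    simpa using sum_patternCount hC hs (a := a) (b := b) (c := c) (by simpa using ht.1)
      (by simpa using ht.2)
  have sum_triples := sum_congr rfl sum_at_triple
  rw [sum_const, card_consecutiveTriples, nsmul_eq_mul, ← mul_sum, sum_sub_distrib, sum_const,
    card_consecutiveTriples, nsmul_eq_mul, ← mul_sum, sum_comm] at sum_triples
  simpa only [card_occ231_add_card_occ312] using sum_triples

theorem sum_card_occ231 (hn : 3 ≤ n) (hC : ConjInvariant C) {s : Multiset ℕ}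
    (hs : ∀ π ∈ C, π.partition.parts = s) :
    6 * (n * (n - 1)) * ∑ π ∈ C, (#(occ231 π) : ℤ) =
      #C * (n * (n - 1) * (n - 2) + defectTotal n (s.count 1) (s.count 2) (s.count 3)) := by
  have total := sum_card_occ231_add_card_occ312 hC hs
  have sum_312 : (∑ π ∈ C, #(occ312 π) : ℤ) = ∑ π ∈ C, #(occ231 π) := mod_cast sum_card_occ312 hC
  rw [cast_descFactorial_three_s14, sum_add_distrib, sum_312, Nat.cast_sub (by omega)] at total
  have hn₂ : (n : ℤ) - 2 ≠ 0 := by omega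
  apply mul_left_cancel₀ hn₂
  push_cast at total
  linear_combination total

end Fin

section ConjClass

variable {n : ℕ}

theorem conjInvariant_conjClass (lam : n.Partition) : ConjInvariant (conjClass n lam) := by
  intro σ π hπ
  have partition_eq : π.partition = (σ * π * σ⁻¹).partition :=
    Perm.partition_eq_of_isConj.1 (isConj_iff.2 ⟨σ, rfl⟩)
  simpa [conjClass, ← partition_eq] using hπ

theorem sum_card_occ231_conjClass (hn : 3 ≤ n) {lam : n.Partition} {p q r : ℚ}
    (hp : p = lam.parts.count 1) (hq : q = lam.parts.count 2) (hr : r = lam.parts.count 3) :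
    ∑ π ∈ conjClass n lam, (#(occ231 π) : ℚ) = #(conjClass n lam) * (((n : ℚ) - 2) / 6
      - (p - 1) / (2 * n) - ((p - 1) * (p - 2) / 2 + q - 1) / (2 * n * (n - 1))
      + ((p - 1) * (p - 2) / 2 - q) / (2 * n * (n - 1))
      - ((p - 1) * (p - 2) * (p - 3) / 3 - p - r + 2) / (2 * n * (n - 1))) := by
  have total := congrArg (Int.cast : ℤ → ℚ)
    (sum_card_occ231 hn (conjInvariant_conjClass lam) fun _ hπ => (mem_filter.1 hπ).2)
  simp only [defectTotal] at total
  push_cast at total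
  rw [← hp, ← hq, ← hr] at total
  have hn' : (3 : ℚ) ≤ n := mod_cast hn
  have hn₀ : (n : ℚ) ≠ 0 := by linarith
  have hn₁ : (n : ℚ) - 1 ≠ 0 := by linarith
  field_simp
  linear_combination 12 * total

end ConjClass

theorem stmt14 (n : ℕ) (hn : 3 ≤ n) (lam : n.Partition)
    (p q r X₁ X₂ X₃ X₄ : ℚ)
    (hp : p = (lam.parts.count 1 : ℚ)) (hq : q = (lam.parts.count 2 : ℚ))
    (hr : r = (lam.parts.count 3 : ℚ))
    (hX1 : X₁ = p - 1) (hX2 : X₂ = (p - 1) * (p - 2) / 2 + q - 1)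
    (hX3 : X₃ = (p - 1) * (p - 2) / 2 - q)
    (hX4 : X₄ = (p - 1) * (p - 2) * (p - 3) / 3 - p - r + 2) :
    ((∑ π ∈ conjClass n lam,
      ((((Finset.univ : Finset (Fin n × Fin n × Fin n)).filter fun x =>
          (x.1 : ℕ) + 1 = (x.2.1 : ℕ) ∧ (x.2.1 : ℕ) + 1 = (x.2.2 : ℕ) ∧ π x.2.2 < π x.1 ∧ π x.1 < π x.2.1).card : ℚ)))
      = ((conjClass n lam).card : ℚ) *
        (((n : ℚ) - 2) / 6 - X₁ / (2 * (n : ℚ))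
          - X₂ / (2 * (n : ℚ) * ((n : ℚ) - 1)) + X₃ / (2 * (n : ℚ) * ((n : ℚ) - 1))
          - X₄ / (2 * (n : ℚ) * ((n : ℚ) - 1)))) ∧
    ((∑ π ∈ conjClass n lam,
      ((((Finset.univ : Finset (Fin n × Fin n × Fin n)).filter fun x =>
          (x.1 : ℕ) + 1 = (x.2.1 : ℕ) ∧ (x.2.1 : ℕ) + 1 = (x.2.2 : ℕ) ∧ π x.2.1 < π x.2.2 ∧ π x.2.2 < π x.1).card : ℚ)))
      = ((conjClass n lam).card : ℚ) *
        (((n : ℚ) - 2) / 6 - X₁ / (2 * (n : ℚ))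
          - X₂ / (2 * (n : ℚ) * ((n : ℚ) - 1)) + X₃ / (2 * (n : ℚ) * ((n : ℚ) - 1))
          - X₄ / (2 * (n : ℚ) * ((n : ℚ) - 1)))) := by
  subst hX1 hX2 hX3 hX4
  have sum_231 := sum_card_occ231_conjClass hn hp hq hr
  have sum_312 : ∑ π ∈ conjClass n lam, (#(occ312 π) : ℚ) =
      ∑ π ∈ conjClass n lam, (#(occ231 π) : ℚ) :=
    mod_cast sum_card_occ312 (conjInvariant_conjClass lam)
  exact ⟨sum_231, sum_312.trans sum_231⟩
end
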